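/- arXiv:1411.6354 — 2 statements merged into one kernel-verified Lean document; each statement's English description precedes it below -/
import Mathlib

section
/- Let w be a weight structure on a triangulated category C and let D be a full triangulated subcategory of C such that w restricts to D. Let l : C → C/D be the Verdier quotient functor and let w_{C/D} be the induced weight structure on C/D. Then the heart of w_{C/D} is the Karoubi-closure of l(C_{w=0}) in C/D: every object of (C/D)_{w_{C/D}=0} is a retract in C/D of l(X) for some X ∈ C_{w=0}, and conversely every such retract lies in (C/D)_{w_{C/D}=0}. Moreover, if w is bounded then w_{C/D} is bounded. -/
/-!
Let `X` be a retract of `L A` with `A ∈ C_{w≤0}` and of `L B` with `B ∈ C_{w≥0}`, and let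
`H ⟶ B ⟶ Y ⟶ H[1]` be a weight decomposition of `B`. Then `H` lies in the heart, since `H[1]` is
an extension of `B[1]` by `Y`. The composite `L A ⟶ X ⟶ L B ⟶ L Y` vanishes by orthogonality in
the quotient, so `L A ⟶ X ⟶ L B` factors through `L H`, and `X` is a retract
of `L H`.

Orthogonality in the quotient comes from a one-sided calculus of fractions: if the cone `Q` of
`s : N ⟶ M` lies in `D`, a morphism `A ⟶ M` with `A ∈ C_{w≤0}` induces a morphism `A ⟶ Q`, which
factors through `w_{≤0} Q ∈ D`. The fibre `A'` of `A ⟶ w_{≤0} Q` is again in `C_{w≤0}`, the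
morphism `A' ⟶ A` becomes invertible in the quotient, and `A' ⟶ A ⟶ M` lifts along `s`. Hence
every morphism `L A ⟶ L M` is a fraction whose denominator has its source in `C_{w≤0}`.
-/

open CategoryTheory CategoryTheory.Limits CategoryTheory.Pretriangulated

namespace CWH

/-- `X` is a retract of `Y`. -/
def IsRetract {C : Type*} [Category C] (X Y : C) : Prop :=
  ∃ (i : X ⟶ Y) (r : Y ⟶ X), i ≫ r = 𝟙 X

/-- The Karoubi-closure of a class of objects: all retracts of its objects. -/
def retractClosure {C : Type*} [Category C] (S : Set C) : Set C :=
  {X : C | ∃ Y ∈ S, IsRetract X Y}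

variable (C : Type*) [Category C] [HasZeroObject C] [HasShift C ℤ]
  [Preadditive C] [∀ n : ℤ, (shiftFunctor C n).Additive] [Pretriangulated C]

/-- A weight structure on a (pre)triangulated category (homological convention):
a pair of retract-closed classes `LE = C_{w≤0}` and `GE = C_{w≥0}` such that
`C_{w≤0} ⊆ C_{w≤0}[1]`, `C_{w≥0}[1] ⊆ C_{w≥0}`, `Hom(C_{w≤0}, C_{w≥0}[1]) = 0`,
and every object admits a weight decomposition. -/
structure WeightStructure where
  LE : Set C
  GE : Set C
  retract_LE : ∀ ⦃X Y : C⦄, IsRetract X Y → Y ∈ LE → X ∈ LE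
  retract_GE : ∀ ⦃X Y : C⦄, IsRetract X Y → Y ∈ GE → X ∈ GE
  shift_LE : ∀ ⦃X : C⦄, X ∈ LE → X⟦(-1 : ℤ)⟧ ∈ LE
  shift_GE : ∀ ⦃X : C⦄, X ∈ GE → X⟦(1 : ℤ)⟧ ∈ GE
  orthogonal : ∀ ⦃X Y : C⦄, X ∈ LE → Y ∈ GE → ∀ f : X ⟶ Y⟦(1 : ℤ)⟧, f = 0
  decomp : ∀ M : C, ∃ (X Y : C) (f : X ⟶ M) (g : M ⟶ Y) (h : Y ⟶ X⟦(1 : ℤ)⟧),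
    Triangle.mk f g h ∈ (distTriang C) ∧ X ∈ LE ∧ Y⟦(-1 : ℤ)⟧ ∈ GE

variable {C}

namespace WeightStructure

variable (w : WeightStructure C)

/-- `C_{w≤i} = C_{w≤0}[i]`. -/
def le (i : ℤ) : Set C := {X : C | X⟦(-i)⟧ ∈ w.LE}

/-- `C_{w≥i} = C_{w≥0}[i]`. -/
def ge (i : ℤ) : Set C := {X : C | X⟦(-i)⟧ ∈ w.GE}

/-- `C_{w=i} = C_{w≤i} ∩ C_{w≥i}`. -/
def eqw (i : ℤ) : Set C := w.le i ∩ w.ge i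

/-- `w` is bounded if every object lies in some `C_{w≤i}` and in some `C_{w≥i}`. -/
def IsBounded : Prop := ∀ X : C, (∃ i : ℤ, X ∈ w.le i) ∧ (∃ i : ℤ, X ∈ w.ge i)

end WeightStructure

/-- The extension-closure of a class `S` of objects: the smallest class containing
the zero objects and `S` and closed under extensions (distinguished triangles). -/
inductive ExtClosure (S : Set C) : C → Prop
  | zero (X : C) : IsZero X → ExtClosure S X
  | of (X : C) : X ∈ S → ExtClosure S X
  | ext {A E B : C} (f : A ⟶ E) (g : E ⟶ B) (h : B ⟶ A⟦(1 : ℤ)⟧) :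
      Triangle.mk f g h ∈ (distTriang C) → ExtClosure S A → ExtClosure S B → ExtClosure S E

/-- The smallest full Karoubi-closed (strict) triangulated subcategory containing `S`:
closure under zero objects, shifts, cones and retracts. -/
inductive TriangClosure (S : Set C) : C → Prop
  | of (X : C) : X ∈ S → TriangClosure S X
  | zero (X : C) : IsZero X → TriangClosure S X
  | shift (X : C) (n : ℤ) : TriangClosure S X → TriangClosure S (X⟦n⟧)
  | ext {X Y Z : C} (f : X ⟶ Y) (g : Y ⟶ Z) (h : Z ⟶ X⟦(1 : ℤ)⟧) :
      Triangle.mk f g h ∈ (distTriang C) → TriangClosure S X → TriangClosure S Y →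
      TriangClosure S Z
  | retract (X Y : C) : IsRetract X Y → TriangClosure S Y → TriangClosure S X

/-- A (strict) full triangulated subcategory, given by its class of objects:
it contains the zero objects and is closed under shifts and under the
two-out-of-three property for distinguished triangles. -/
structure IsTriangulatedSub (P : Set C) : Prop where
  zero : ∀ X : C, IsZero X → X ∈ P
  shift : ∀ X ∈ P, ∀ n : ℤ, X⟦n⟧ ∈ P
  ext₂ : ∀ ⦃X Y Z : C⦄ (f : X ⟶ Y) (g : Y ⟶ Z) (h : Z ⟶ X⟦(1 : ℤ)⟧),
    Triangle.mk f g h ∈ (distTriang C) → X ∈ P → Z ∈ P → Y ∈ P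
  ext₃ : ∀ ⦃X Y Z : C⦄ (f : X ⟶ Y) (g : Y ⟶ Z) (h : Z ⟶ X⟦(1 : ℤ)⟧),
    Triangle.mk f g h ∈ (distTriang C) → X ∈ P → Y ∈ P → Z ∈ P
  ext₁ : ∀ ⦃X Y Z : C⦄ (f : X ⟶ Y) (g : Y ⟶ Z) (h : Z ⟶ X⟦(1 : ℤ)⟧),
    Triangle.mk f g h ∈ (distTriang C) → Y ∈ P → Z ∈ P → X ∈ P

/-- A weight structure on the full (triangulated) subcategory of `C` whose objects
are given by the class `P`; retracts are taken inside `P` and the distinguished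
triangles of the subcategory are the distinguished triangles of `C` with vertices
in `P`. -/
structure IsWeightStructureOn (P LEs GEs : Set C) : Prop where
  le_sub : LEs ⊆ P
  ge_sub : GEs ⊆ P
  retract_le : ∀ ⦃X Y : C⦄, X ∈ P → IsRetract X Y → Y ∈ LEs → X ∈ LEs
  retract_ge : ∀ ⦃X Y : C⦄, X ∈ P → IsRetract X Y → Y ∈ GEs → X ∈ GEs
  shift_le : ∀ ⦃X : C⦄, X ∈ LEs → X⟦(-1 : ℤ)⟧ ∈ LEs
  shift_ge : ∀ ⦃X : C⦄, X ∈ GEs → X⟦(1 : ℤ)⟧ ∈ GEs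
  orthogonal : ∀ ⦃X Y : C⦄, X ∈ LEs → Y ∈ GEs → ∀ f : X ⟶ Y⟦(1 : ℤ)⟧, f = 0
  decomp : ∀ M ∈ P, ∃ (X Y : C) (f : X ⟶ M) (g : M ⟶ Y) (h : Y ⟶ X⟦(1 : ℤ)⟧),
    Triangle.mk f g h ∈ (distTriang C) ∧ X ∈ LEs ∧ Y⟦(-1 : ℤ)⟧ ∈ GEs

/-- The class of morphisms of `C` whose cone lies in `P`; the Verdier quotient
`C/P` is the localization of `C` at this class. -/
def coneIn (P : Set C) : MorphismProperty C := fun X Y f =>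
  ∃ (Z : C) (g : Y ⟶ Z) (h : Z ⟶ X⟦(1 : ℤ)⟧),
    Triangle.mk f g h ∈ (distTriang C) ∧ Z ∈ P

/-- A weight Postnikov tower for `M`: choices of weight truncations `trunc l = w_{≤l}M`
(with cones `conePt l = w_{≥l+1}M`), of the connecting morphisms between them that are
compatible with `𝟙 M`, and of the distinguished triangles
`w_{≤l}M → w_{≤l+1}M → M^{-l-1}[l+1] → (w_{≤l}M)[1]`; the objects `termAt l = M^{-l}`
lie in the heart and are the terms of the associated weight complex `t(M)`, whose
boundary morphisms `bd (l+1) l : M^{-l-1} → M^{-l}` are obtained by composing the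
connecting morphisms of two consecutive triangles. -/
structure WeightPostnikovTower (w : WeightStructure C) (M : C) where
  trunc : ℤ → C
  trunc_mem : ∀ l : ℤ, trunc l ∈ w.le l
  ι : ∀ l : ℤ, trunc l ⟶ M
  conePt : ℤ → C
  cone_mem : ∀ l : ℤ, conePt l ∈ w.ge (l + 1)
  coneπ : ∀ l : ℤ, M ⟶ conePt l
  coneδ : ∀ l : ℤ, conePt l ⟶ (trunc l)⟦(1 : ℤ)⟧
  trunc_dist : ∀ l : ℤ, Triangle.mk (ι l) (coneπ l) (coneδ l) ∈ (distTriang C)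
  step : ∀ l : ℤ, trunc l ⟶ trunc (l + 1)
  step_ι : ∀ l : ℤ, step l ≫ ι (l + 1) = ι l
  termAt : ℤ → C
  term_mem : ∀ l : ℤ, termAt l ∈ w.LE ∧ termAt l ∈ w.GE
  sπ : ∀ l : ℤ, trunc l ⟶ (termAt l)⟦l⟧
  sδ : ∀ l : ℤ, (termAt (l + 1))⟦(l + 1 : ℤ)⟧ ⟶ (trunc l)⟦(1 : ℤ)⟧
  step_dist : ∀ l : ℤ, Triangle.mk (step l) (sπ (l + 1)) (sδ l) ∈ (distTriang C)
  bd : ∀ i j : ℤ, termAt i ⟶ termAt j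
  bd_shape : ∀ i j : ℤ, j + 1 ≠ i → bd i j = 0
  bd_eq : ∀ l : ℤ,
    (shiftFunctor C (l + 1)).map (bd (l + 1) l) ≫
      (shiftFunctorAdd' C l 1 (l + 1) rfl).hom.app (termAt l) =
    sδ l ≫ (shiftFunctor C (1 : ℤ)).map (sπ l)

/-- The differential of the weight complex associated to a weight Postnikov tower,
in "homological" indexing: the `l`-th term `termAt l` is the `(-l)`-th term `M^{-l}`
of the weight complex. -/
def towerD {w : WeightStructure C} {M : C} (T : WeightPostnikovTower w M) :
    ∀ l : ℤ, T.termAt (l + 1) ⟶ T.termAt l :=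
  fun l => T.bd (l + 1) l

section Complexes

variable {X Y : ℤ → C}

/-- A morphism of ("homologically indexed") complexes. -/
def IsChainMapDown (X Y : ℤ → C) (dX : ∀ l : ℤ, X (l + 1) ⟶ X l)
    (dY : ∀ l : ℤ, Y (l + 1) ⟶ Y l) (f : ∀ l : ℤ, X l ⟶ Y l) : Prop :=
  ∀ l : ℤ, f (l + 1) ≫ dY l = dX l ≫ f l

/-- Two families of morphisms of complexes are chain homotopic. -/
def ChainHomotopicDown (X Y : ℤ → C) (dX : ∀ l : ℤ, X (l + 1) ⟶ X l)
    (dY : ∀ l : ℤ, Y (l + 1) ⟶ Y l) (f g : ∀ l : ℤ, X l ⟶ Y l) : Prop :=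
  ∃ s : ∀ l : ℤ, X l ⟶ Y (l + 1),
    ∀ l : ℤ, f (l + 1) - g (l + 1) = s (l + 1) ≫ dY (l + 1) + dX l ≫ s l

/-- Two complexes are homotopy equivalent (i.e., isomorphic in the homotopy category). -/
def HomotopyEquivDown (X Y : ℤ → C) (dX : ∀ l : ℤ, X (l + 1) ⟶ X l)
    (dY : ∀ l : ℤ, Y (l + 1) ⟶ Y l) : Prop :=
  ∃ (f : ∀ l : ℤ, X l ⟶ Y l) (g : ∀ l : ℤ, Y l ⟶ X l),
    IsChainMapDown X Y dX dY f ∧ IsChainMapDown Y X dY dX g ∧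
    ChainHomotopicDown X X dX dX (fun l => f l ≫ g l) (fun l => 𝟙 (X l)) ∧
    ChainHomotopicDown Y Y dY dY (fun l => g l ≫ f l) (fun l => 𝟙 (Y l))

end Complexes


section Retracts

variable {A : Type*} [Category A] {B : Type*} [Category B]

lemma IsRetract.of_iso {X Y : A} (e : X ≅ Y) : IsRetract X Y :=
  ⟨e.hom, e.inv, e.hom_inv_id⟩

lemma IsRetract.map {X Y : A} (h : IsRetract X Y) (F : A ⥤ B) :
    IsRetract (F.obj X) (F.obj Y) := by
  obtain ⟨i, r, hir⟩ := h
  exact ⟨F.map i, F.map r, by rw [← F.map_comp, hir, F.map_id]⟩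

lemma IsRetract.of_forall_factorization {X Y Z H : A} (hY : IsRetract X Y) (hZ : IsRetract X Z)
    (hH : ∀ φ : Y ⟶ Z, ∃ (u : Y ⟶ H) (v : H ⟶ Z), φ = u ≫ v) : IsRetract X H := by
  obtain ⟨i, r, hir⟩ := hY
  obtain ⟨j, q, hjq⟩ := hZ
  obtain ⟨u, v, huv⟩ := hH (r ≫ j)
  refine ⟨i ≫ u, v ≫ q, ?_⟩
  calc (i ≫ u) ≫ v ≫ q = i ≫ (u ≫ v) ≫ q := by simp only [Category.assoc]
    _ = i ≫ r ≫ j ≫ q := by rw [← huv, Category.assoc]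
    _ = 𝟙 X := by rw [hjq, Category.comp_id, hir]

lemma retractClosure_mono {S T : Set A} (h : S ⊆ T) : retractClosure S ⊆ retractClosure T := by
  rintro X ⟨Y, hY, hXY⟩
  exact ⟨Y, h hY, hXY⟩

lemma exists_shift_mem_retractClosure {G : Type*} [AddMonoid G] [HasShift A G] [HasShift B G]
    (F : A ⥤ B) [F.CommShift G] [F.EssSurj] {S : Set A} (hS : ∀ M : A, ∃ n : G, M⟦n⟧ ∈ S)
    (X : B) : ∃ n : G, X⟦n⟧ ∈ retractClosure (F.obj '' S) := by
  obtain ⟨n, hn⟩ := hS (F.objPreimage X)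
  have e : X⟦n⟧ ≅ F.obj ((F.objPreimage X)⟦n⟧) :=
    (shiftFunctor B n).mapIso (F.objObjPreimageIso X).symm ≪≫ ((F.commShiftIso n).app _).symm
  exact ⟨n, _, ⟨_, hn, rfl⟩, .of_iso e⟩

end Retracts

section Fractions

variable {A : Type*} [Category A] {B : Type*} [Category B]

/-- `φ` is a left fraction `(F t)⁻¹ ≫ F f` whose denominator `t` has its source in `S`. Only the
invertibility of `F t` is required, as this, unlike membership of `t` in a given class of
morphisms, is stable under composition of denominators. -/
def IsFractionFrom (S : Set A) (F : A ⥤ B) {X Y : A} (φ : F.obj X ⟶ F.obj Y) : Prop :=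
  ∃ X' ∈ S, ∃ (t : X' ⟶ X) (f : X' ⟶ Y), IsIso (F.map t) ∧ F.map t ≫ φ = F.map f

/-- Objects of `S` satisfy the Ore condition with respect to `W`: a morphism from an object of `S`
lifts along any morphism of `W`, after composition with a morphism of `W` whose source is again
in `S`. -/
def HasOreLifts (S : Set A) (W : MorphismProperty A) : Prop :=
  ∀ ⦃X M N : A⦄, X ∈ S → ∀ (f : X ⟶ M) (s : N ⟶ M), W s →
    ∃ X' ∈ S, ∃ (t : X' ⟶ X) (f' : X' ⟶ N), W t ∧ t ≫ f = f' ≫ s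

variable {S : Set A} {F : A ⥤ B} {X Y Z : A}

lemma IsFractionFrom.id (hX : X ∈ S) : IsFractionFrom S F (𝟙 (F.obj X)) :=
  ⟨X, hX, 𝟙 X, 𝟙 X, inferInstance, Category.comp_id _⟩

lemma IsFractionFrom.comp_map {φ : F.obj X ⟶ F.obj Y} (hφ : IsFractionFrom S F φ) (g : Y ⟶ Z) :
    IsFractionFrom S F (φ ≫ F.map g) := by
  obtain ⟨X', hX', t, f, ht, hf⟩ := hφ
  exact ⟨X', hX', t, f ≫ g, ht, by rw [reassoc_of% hf, F.map_comp]⟩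

lemma IsFractionFrom.comp_inv {W : MorphismProperty A} (hSW : HasOreLifts S W)
    (hW : W.IsInvertedBy F) {φ : F.obj X ⟶ F.obj Y} (hφ : IsFractionFrom S F φ)
    {s : Z ⟶ Y} (hs : W s) [IsIso (F.map s)] : IsFractionFrom S F (φ ≫ inv (F.map s)) := by
  obtain ⟨X', hX', t, f, ht, hf⟩ := hφ
  obtain ⟨X'', hX'', t', f', ht', hlift⟩ := hSW hX' f s hs
  have : IsIso (F.map t') := hW t' ht'
  refine ⟨X'', hX'', t' ≫ t, f', by rw [F.map_comp]; infer_instance, ?_⟩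
  rw [← Category.assoc, IsIso.comp_inv_eq]
  calc F.map (t' ≫ t) ≫ φ = F.map t' ≫ F.map f := by rw [F.map_comp, Category.assoc, hf]
    _ = F.map f' ≫ F.map s := by rw [← F.map_comp, hlift, F.map_comp]

lemma IsFractionFrom.eq_zero [HasZeroMorphisms A] [HasZeroMorphisms B] [F.PreservesZeroMorphisms]
    {φ : F.obj X ⟶ F.obj Y} (hφ : IsFractionFrom S F φ)
    (hS : ∀ X' ∈ S, ∀ f : X' ⟶ Y, f = 0) : φ = 0 := by
  obtain ⟨X', hX', t, f, ht, hf⟩ := hφ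
  rw [← cancel_epi (F.map t), hf, hS X' hX' f, F.map_zero, comp_zero]

lemma HasOreLifts.isFractionFrom {W : MorphismProperty A} (hSW : HasOreLifts S W)
    [F.IsLocalization W] (hX : X ∈ S) (φ : F.obj X ⟶ F.obj Y) : IsFractionFrom S F φ := by
  suffices ∀ ψ : StructuredArrow (F.obj X) F, IsFractionFrom S F ψ.hom from
    this (StructuredArrow.mk φ)
  intro ψ
  induction ψ using Localization.induction_structuredArrow F W with
  | hP₀ => exact .id hX
  | hP₁ g ψ hψ => exact hψ.comp_map g
  | hP₂ s hs ψ hψ =>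
    have := Localization.inverts F W s hs
    exact hψ.comp_inv hSW (Localization.inverts F W) hs

end Fractions

namespace WeightStructure

variable (w : WeightStructure C)

lemma hom_eq_zero {X Y : C} (hX : X ∈ w.LE) (hY : Y ∈ w.ge 1) (f : X ⟶ Y) : f = 0 := by
  let e : Y ≅ (Y⟦(-1 : ℤ)⟧)⟦(1 : ℤ)⟧ := (shiftNegShift Y (1 : ℤ)).symm
  rw [← cancel_mono e.hom, zero_comp]
  exact w.orthogonal hX hY _

lemma shift_one_mem_ge_one_iff {X : C} : X⟦(1 : ℤ)⟧ ∈ w.ge 1 ↔ X ∈ w.GE :=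
  ⟨w.retract_GE (.of_iso (shiftShiftNeg X (1 : ℤ)).symm),
    w.retract_GE (.of_iso (shiftShiftNeg X (1 : ℤ)))⟩

lemma mem_LE_iff {X : C} : X ∈ w.LE ↔ ∀ Y ∈ w.ge 1, ∀ f : X ⟶ Y, f = 0 := by
  refine ⟨fun hX Y hY => w.hom_eq_zero hX hY, fun hX => ?_⟩
  obtain ⟨A, B, f, g, d, hT, hA, hB⟩ := w.decomp X
  obtain ⟨s, hs⟩ : ∃ s : X ⟶ A, 𝟙 X = s ≫ f :=
    Triangle.coyoneda_exact₂ _ hT (𝟙 X) ((Category.id_comp g).trans (hX B hB g))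
  exact w.retract_LE ⟨s, f, hs.symm⟩ hA

lemma mem_ge_one_iff {Y : C} : Y ∈ w.ge 1 ↔ ∀ X ∈ w.LE, ∀ f : X ⟶ Y, f = 0 := by
  refine ⟨fun hY X hX => w.hom_eq_zero hX hY, fun hY => ?_⟩
  obtain ⟨A, B, f, g, d, hT, hA, hB⟩ := w.decomp Y
  obtain ⟨r, hr⟩ : ∃ r : B ⟶ Y, 𝟙 Y = g ≫ r :=
    Triangle.yoneda_exact₂ _ hT (𝟙 Y) ((Category.comp_id f).trans (hY A hA f))
  have hYB : IsRetract Y B := ⟨g, r, hr.symm⟩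
  exact w.retract_GE (hYB.map (shiftFunctor C (-1 : ℤ))) hB

lemma obj₂_mem_LE {T : Triangle C} (hT : T ∈ distTriang C)
    (h₁ : T.obj₁ ∈ w.LE) (h₃ : T.obj₃ ∈ w.LE) : T.obj₂ ∈ w.LE := by
  refine w.mem_LE_iff.2 fun Y hY f => ?_
  obtain ⟨g, rfl⟩ := Triangle.yoneda_exact₂ T hT f (w.hom_eq_zero h₁ hY _)
  rw [w.hom_eq_zero h₃ hY g, comp_zero]

lemma obj₂_mem_ge_one {T : Triangle C} (hT : T ∈ distTriang C)
    (h₁ : T.obj₁ ∈ w.ge 1) (h₃ : T.obj₃ ∈ w.ge 1) : T.obj₂ ∈ w.ge 1 := by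
  refine w.mem_ge_one_iff.2 fun X hX f => ?_
  obtain ⟨g, rfl⟩ := Triangle.coyoneda_exact₂ T hT f (w.hom_eq_zero hX h₃ _)
  rw [w.hom_eq_zero hX h₁ g, zero_comp]

lemma obj₁_mem_LE {T : Triangle C} (hT : T ∈ distTriang C)
    (h₂ : T.obj₂ ∈ w.LE) (h₃ : T.obj₃ ∈ w.LE) : T.obj₁ ∈ w.LE :=
  w.obj₂_mem_LE (inv_rot_of_distTriang T hT) (w.shift_LE h₃) h₂

lemma obj₁_mem_GE {T : Triangle C} (hT : T ∈ distTriang C)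
    (h₂ : T.obj₂ ∈ w.GE) (h₃ : T.obj₃ ∈ w.ge 1) : T.obj₁ ∈ w.GE :=
  w.shift_one_mem_ge_one_iff.1 <|
    w.obj₂_mem_ge_one (rot_of_distTriang _ (rot_of_distTriang T hT)) h₃
      (w.shift_one_mem_ge_one_iff.2 h₂)

/-- Every object `Q` of `P` has a weight truncation `w_{≤0} Q` in `P`; its cone `w_{≥1} Q` is
not asked to lie in `P`, and `P` may be any class of objects. -/
def HasTruncationsIn (P : Set C) : Prop :=
  ∀ Q ∈ P, ∃ (X Y : C) (f : X ⟶ Q) (g : Q ⟶ Y) (h : Y ⟶ X⟦(1 : ℤ)⟧),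
    Triangle.mk f g h ∈ (distTriang C) ∧ X ∈ P ∩ w.LE ∧ Y ∈ w.ge 1

variable {w} {P : Set C}

lemma HasTruncationsIn.hasOreLifts (hP : w.HasTruncationsIn P) :
    HasOreLifts w.LE (coneIn P) := by
  intro A M N hA f s hs
  obtain ⟨Q, g, h, hQ, hQP⟩ := hs
  obtain ⟨X, Y, x, y, d, hX, hXP, hY⟩ := hP Q hQP
  obtain ⟨a, ha⟩ : ∃ a : A ⟶ X, f ≫ g = a ≫ x :=
    Triangle.coyoneda_exact₂ _ hX (f ≫ g) (w.hom_eq_zero hA hY _)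
  obtain ⟨A', t, b, hA'⟩ := distinguished_cocone_triangle₁ a
  have hta : t ≫ a = 0 := comp_distTriang_mor_zero₁₂ _ hA'
  have htfg : (t ≫ f) ≫ g = 0 := by rw [Category.assoc, ha, reassoc_of% hta, zero_comp]
  obtain ⟨f', hf'⟩ : ∃ f' : A' ⟶ N, t ≫ f = f' ≫ s :=
    Triangle.coyoneda_exact₂ _ hQ (t ≫ f) htfg
  exact ⟨A', w.obj₁_mem_LE hA' hA hXP.2, t, f', ⟨X, a, b, hA', hXP.1⟩, hf'⟩

lemma HasTruncationsIn.map_hom_eq_zero {E : Type*} [Category E] [HasZeroMorphisms E]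
    (hP : w.HasTruncationsIn P) (L : C ⥤ E) [L.PreservesZeroMorphisms]
    [L.IsLocalization (coneIn P)] {A Y : C} (hA : A ∈ w.LE) (hY : Y ∈ w.ge 1)
    (φ : L.obj A ⟶ L.obj Y) : φ = 0 :=
  (hP.hasOreLifts.isFractionFrom hA φ).eq_zero fun _ hX => w.hom_eq_zero hX hY

section Quotient

variable {E : Type*} [Category E] [HasZeroObject E] [HasShift E ℤ]
  [Preadditive E] [∀ n : ℤ, (shiftFunctor E n).Additive] [Pretriangulated E]

lemma HasTruncationsIn.exists_factorization_through_heart (hP : w.HasTruncationsIn P)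
    (L : C ⥤ E) [L.CommShift ℤ] [L.IsTriangulated] [L.IsLocalization (coneIn P)]
    {B : C} (hB : B ∈ w.GE) :
    ∃ H ∈ w.LE ∩ w.GE, ∀ A ∈ w.LE, ∀ φ : L.obj A ⟶ L.obj B,
      ∃ (u : L.obj A ⟶ L.obj H) (v : L.obj H ⟶ L.obj B), φ = u ≫ v := by
  obtain ⟨H, Y, f, g, d, hT, hH, hY⟩ := w.decomp B
  refine ⟨H, ⟨hH, w.obj₁_mem_GE hT hB hY⟩, fun A hA φ => ?_⟩
  obtain ⟨u, hu⟩ := Triangle.coyoneda_exact₂ _ (L.map_distinguished _ hT) φ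
    (hP.map_hom_eq_zero L hA hY _)
  exact ⟨u, L.map f, hu⟩

lemma HasTruncationsIn.retractClosure_inter_eq (hP : w.HasTruncationsIn P)
    (L : C ⥤ E) [L.CommShift ℤ] [L.IsTriangulated] [L.IsLocalization (coneIn P)] :
    retractClosure (L.obj '' w.LE) ∩ retractClosure (L.obj '' w.GE) =
      retractClosure (L.obj '' (w.LE ∩ w.GE)) := by
  refine Set.Subset.antisymm ?_ (Set.subset_inter
    (retractClosure_mono (Set.image_mono Set.inter_subset_left))
    (retractClosure_mono (Set.image_mono Set.inter_subset_right)))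
  rintro X ⟨⟨_, ⟨A, hA, rfl⟩, hXA⟩, ⟨_, ⟨B, hB, rfl⟩, hXB⟩⟩
  obtain ⟨H, hH, hfac⟩ := hP.exists_factorization_through_heart L hB
  exact ⟨_, ⟨H, hH, rfl⟩, hXA.of_forall_factorization hXB (hfac A hA)⟩

end Quotient

end WeightStructure

lemma IsWeightStructureOn.hasTruncationsIn {w : WeightStructure C} {P : Set C}
    (h : IsWeightStructureOn P (P ∩ w.LE) (P ∩ w.GE)) : w.HasTruncationsIn P := by
  intro Q hQ
  obtain ⟨X, Y, f, g, d, hT, hX, hY⟩ := h.decomp Q hQ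
  exact ⟨X, Y, f, g, d, hT, hX, hY.2⟩

theorem statement11_general {E : Type*} [Category E] [HasZeroObject E] [HasShift E ℤ]
    [Preadditive E] [∀ n : ℤ, (shiftFunctor E n).Additive] [Pretriangulated E]
    (w : WeightStructure C) (P : Set C) (hP : w.HasTruncationsIn P)
    (L : C ⥤ E) [L.CommShift ℤ] [L.IsTriangulated] [L.IsLocalization (coneIn P)] :
    retractClosure (L.obj '' w.LE) ∩ retractClosure (L.obj '' w.GE) =
      retractClosure (L.obj '' (w.LE ∩ w.GE)) ∧
    (w.IsBounded → ∀ X : E,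
      (∃ n : ℤ, X⟦n⟧ ∈ retractClosure (L.obj '' w.LE)) ∧
      (∃ n : ℤ, X⟦n⟧ ∈ retractClosure (L.obj '' w.GE))) := by
  refine ⟨hP.retractClosure_inter_eq L, fun hw X => ?_⟩
  have := Localization.essSurj L (coneIn P)
  have hLE (M : C) : ∃ n : ℤ, M⟦n⟧ ∈ w.LE := (hw M).1.imp' Neg.neg fun _ h => h
  have hGE (M : C) : ∃ n : ℤ, M⟦n⟧ ∈ w.GE := (hw M).2.imp' Neg.neg fun _ h => h
  exact ⟨exists_shift_mem_retractClosure L hLE X, exists_shift_mem_retractClosure L hGE X⟩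

/-- the heart of the weight structure induced on the Verdier quotient
`C/D` (realized by a localization `L : C ⥤ E`) is the Karoubi-closure of `L(C_{w=0})`;
moreover, if `w` is bounded then the induced weight structure is bounded. -/
theorem statement11 {E : Type*} [Category E] [HasZeroObject E] [HasShift E ℤ]
    [Preadditive E] [∀ n : ℤ, (shiftFunctor E n).Additive] [Pretriangulated E]
    (w : WeightStructure C) (P : Set C) (hP : IsTriangulatedSub P)
    (hres : IsWeightStructureOn P (P ∩ w.LE) (P ∩ w.GE))
    (L : C ⥤ E) [L.CommShift ℤ] [L.IsTriangulated] [L.IsLocalization (coneIn P)] :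
    retractClosure (L.obj '' w.LE) ∩ retractClosure (L.obj '' w.GE) =
      retractClosure (L.obj '' (w.LE ∩ w.GE)) ∧
    (w.IsBounded → ∀ X : E,
      (∃ n : ℤ, X⟦n⟧ ∈ retractClosure (L.obj '' w.LE)) ∧
      (∃ n : ℤ, X⟦n⟧ ∈ retractClosure (L.obj '' w.GE))) :=
  statement11_general w P hres.hasTruncationsIn L

end CWH
end

section
/- Let w be a bounded weight structure on a triangulated category C and let M be an object of C. Then any two weight complexes of M (arising from two choices of weight Postnikov tower for M) are isomorphic in the homotopy category K(Hw), where Hw is the heart of w. Moreover, if M ∈ C_{w≥0}, then any weight complex of M is isomorphic in K(Hw) to a complex whose terms in positive degrees are zero. -/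
/-!
By orthogonality the identity of `M` lifts to morphisms between any two weight Postnikov towers of
`M`, in both directions. Their composites differ from the identities by morphisms of towers lying
over `0`. On weight complexes, such a morphism `h` need not be visibly null-homotopic: the two
successive liftings through the towers give `h = d t + s d` with possibly different families `s`
and `t`. But then `h` is homotopic to a chain map `n = d r`, with `r = t - s`, which satisfies
`n ^ 2 = 0`. Hence `1 + h` is invertible in the homotopy category, so both composites of the
comparison maps are isomorphisms there, and the comparison maps themselves are too.

If `M` lies in `C_{w≥i}`, then `0 → M` is a weight truncation `w_{≤l}M → M` for each `l < i`, and a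
tower using these truncations has zero terms `M^{-l}` for `l < i`.
-/

open CategoryTheory CategoryTheory.Limits CategoryTheory.Pretriangulated

namespace CWH

variable (C : Type*) [Category C] [HasZeroObject C] [HasShift C ℤ]
  [Preadditive C] [∀ n : ℤ, (shiftFunctor C n).Additive] [Pretriangulated C]

variable {C}

lemma exists_forall_of_forall_exists_add_one {β : ℤ → Type*} {P : ∀ l, β (l + 1) → Prop}
    (h : ∀ l, ∃ x, P l x) : ∃ F : ∀ l, β l, ∀ l, P l (F (l + 1)) := by
  choose F hF using h
  refine ⟨Equiv.piCongrLeft β (Equiv.addRight 1) F, fun l => ?_⟩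
  exact (Equiv.piCongrLeft_apply_apply β (Equiv.addRight 1) F l).symm ▸ hF l

lemma exists_extend_by_zero {β : ℤ → ℤ → Type*} [∀ i j, Zero (β i j)] (d : ∀ l, β (l + 1) l) :
    ∃ F : ∀ i j, β i j, (∀ l, F (l + 1) l = d l) ∧ ∀ i j, j + 1 ≠ i → F i j = 0 :=
  ⟨fun i j => if h : j + 1 = i then h ▸ d j else 0, fun _ => dif_pos rfl, fun _ _ h => dif_neg h⟩

section WeaklyNullHomotopic

variable {D ι : Type*} [Category D] [Preadditive D] {c : ComplexShape ι}
  {K L : HomologicalComplex D c}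

/-- A chain map is weakly null-homotopic if it has the form `d t + s d`, as for a null-homotopic
map, except that the families `s` and `t` need not agree. -/
def IsWeaklyNullHomotopic (h : K ⟶ L) : Prop :=
  ∃ s t : ∀ i j, K.X i ⟶ L.X j, ∀ i, h.f i = dNext i t + prevD i s

lemma nonempty_homotopy_nullHomotopicMap_zero (s : ∀ i j, K.X i ⟶ L.X j) :
    Nonempty (Homotopy (Homotopy.nullHomotopicMap s) 0) := by
  have h : Homotopy.nullHomotopicMap s = Homotopy.nullHomotopicMap' fun i j _ => s i j := by
    ext i
    by_cases hi : c.Rel i (c.next i) <;> by_cases hi' : c.Rel (c.prev i) i <;>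
      simp [Homotopy.nullHomotopicMap', Homotopy.nullHomotopicMap, dNext, prevD, hi, hi']
  exact ⟨(Homotopy.ofEq h).trans (Homotopy.nullHomotopy' _)⟩

lemma IsWeaklyNullHomotopic.exists_homotopy_comp_self_eq_zero {h : K ⟶ K}
    (hh : IsWeaklyNullHomotopic h) : ∃ n : K ⟶ K, n ≫ n = 0 ∧ Nonempty (Homotopy h n) := by
  obtain ⟨s, t, hst⟩ := hh
  -- Subtracting `d s + s d` from `d t + s d` leaves `n = d r` with `r = t - s`. Hence `d n = 0`,
  -- and `n n = n d r = d n r = 0` because `n` is a chain map.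
  let n := h - Homotopy.nullHomotopicMap s
  have hn (i) : n.f i = K.d i (c.next i) ≫ (t - s) (c.next i) i := by
    change h.f i - (dNext i s + prevD i s) = dNext i (t - s)
    rw [hst, map_sub]
    abel
  have hdn (i j) : K.d i j ≫ n.f j = 0 := by rw [hn, K.d_comp_d_assoc, zero_comp]
  refine ⟨n, ?_, ?_⟩
  · ext i
    rw [HomologicalComplex.comp_f]
    nth_rw 2 [hn]
    rw [n.comm_assoc, reassoc_of% hdn, zero_comp, HomologicalComplex.zero_f]
  · obtain ⟨H⟩ := nonempty_homotopy_nullHomotopicMap_zero s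
    exact ⟨Homotopy.equivSubZero.symm ((Homotopy.ofEq (sub_sub_cancel _ _)).trans H)⟩

lemma IsWeaklyNullHomotopic.isIso_quotient_map {φ : K ⟶ K}
    (hφ : IsWeaklyNullHomotopic (φ - 𝟙 K)) : IsIso ((HomotopyCategory.quotient D c).map φ) := by
  obtain ⟨n, hn, ⟨H⟩⟩ := hφ.exists_homotopy_comp_self_eq_zero
  have hφn : (HomotopyCategory.quotient D c).map φ =
      (HomotopyCategory.quotient D c).map (𝟙 K + n) := by
    rw [Functor.map_add, ← HomotopyCategory.eq_of_homotopy _ _ H, ← Functor.map_add,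
      add_sub_cancel]
  have : IsIso (𝟙 K + n) := ⟨𝟙 K - n, by simp [hn], by simp [hn]⟩
  rw [hφn]
  infer_instance

theorem nonempty_homotopyEquiv_of_isWeaklyNullHomotopic {f : K ⟶ L} {g : L ⟶ K}
    (hfg : IsWeaklyNullHomotopic (f ≫ g - 𝟙 K)) (hgf : IsWeaklyNullHomotopic (g ≫ f - 𝟙 L)) :
    Nonempty (HomotopyEquiv K L) := by
  let Q := HomotopyCategory.quotient D c
  have hfg' : IsIso (Q.map f ≫ Q.map g) := Q.map_comp f g ▸ hfg.isIso_quotient_map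
  have hgf' : IsIso (Q.map g ≫ Q.map f) := Q.map_comp g f ▸ hgf.isIso_quotient_map
  have : Mono (Q.map f) := mono_of_mono _ (Q.map g)
  have : IsSplitEpi (Q.map f) :=
    .mk' ⟨inv (Q.map g ≫ Q.map f) ≫ Q.map g, by rw [Category.assoc, IsIso.inv_hom_id]⟩
  have : IsIso (Q.map f) := isIso_of_mono_of_isSplitEpi _
  exact ⟨HomotopyCategory.homotopyEquivOfIso (asIso (Q.map f))⟩

end WeaklyNullHomotopic

section ChainComplex

variable {D : Type*} [Category D] [Preadditive D] {K L : ChainComplex D ℤ}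

lemma isWeaklyNullHomotopic_of_forall_add_one {h : K ⟶ L} (s t : ∀ l, K.X l ⟶ L.X (l + 1))
    (hst : ∀ l, h.f (l + 1) = K.d (l + 1) l ≫ t l + s (l + 1) ≫ L.d (l + 1 + 1) (l + 1)) :
    IsWeaklyNullHomotopic h := by
  obtain ⟨s', hs', -⟩ := exists_extend_by_zero (β := fun i j => K.X j ⟶ L.X i) s
  obtain ⟨t', ht', -⟩ := exists_extend_by_zero (β := fun i j => K.X j ⟶ L.X i) t
  refine ⟨fun i j => s' j i, fun i j => t' j i, fun i => ?_⟩
  obtain ⟨l, rfl⟩ : ∃ l, i = l + 1 := ⟨i - 1, by lia⟩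
  rw [dNext_eq _ (show (ComplexShape.down ℤ).Rel (l + 1) l from rfl),
    prevD_eq _ (show (ComplexShape.down ℤ).Rel (l + 1 + 1) (l + 1) from rfl), hs', ht', hst]

lemma isChainMapDown_f (f : K ⟶ L) : IsChainMapDown K.X L.X (fun l => K.d (l + 1) l)
    (fun l => L.d (l + 1) l) f.f :=
  fun l => f.comm (l + 1) l

lemma chainHomotopicDown_of_homotopy {f g : K ⟶ L} (H : Homotopy f g) :
    ChainHomotopicDown K.X L.X (fun l => K.d (l + 1) l) (fun l => L.d (l + 1) l) f.f g.f := by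
  refine ⟨fun l => H.hom l (l + 1), fun l => ?_⟩
  rw [H.comm, dNext_eq _ (show (ComplexShape.down ℤ).Rel (l + 1) l from rfl),
    prevD_eq _ (show (ComplexShape.down ℤ).Rel (l + 1 + 1) (l + 1) from rfl)]
  abel

lemma homotopyEquivDown_of_homotopyEquiv (e : HomotopyEquiv K L) :
    HomotopyEquivDown K.X L.X (fun l => K.d (l + 1) l) (fun l => L.d (l + 1) l) :=
  ⟨e.hom.f, e.inv.f, isChainMapDown_f e.hom, isChainMapDown_f e.inv,
    chainHomotopicDown_of_homotopy e.homotopyHomInvId,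
    chainHomotopicDown_of_homotopy e.homotopyInvHomId⟩

end ChainComplex

section IsoOfTriangle

variable {X Y Z Y' Z' : C} {f : X ⟶ Y} {g : Y ⟶ Z} {h : Z ⟶ X⟦(1 : ℤ)⟧}

lemma distTriang_of_iso₂ (hT : Triangle.mk f g h ∈ distTriang C) (e : Y ≅ Y') :
    Triangle.mk (f ≫ e.hom) (e.inv ≫ g) h ∈ distTriang C := by
  have h₁ : (f ≫ e.hom) ≫ e.inv = 𝟙 X ≫ f := by simp
  have h₂ : (e.inv ≫ g) ≫ 𝟙 Z = e.inv ≫ g := by simp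
  have h₃ : h ≫ (𝟙 X)⟦(1 : ℤ)⟧' = 𝟙 Z ≫ h := by simp
  exact isomorphic_distinguished _ hT _
    (Triangle.isoMk _ _ (Iso.refl X) e.symm (Iso.refl Z) h₁ h₂ h₃)

lemma distTriang_of_iso₃ (hT : Triangle.mk f g h ∈ distTriang C) (e : Z ≅ Z') :
    Triangle.mk f (g ≫ e.hom) (e.inv ≫ h) ∈ distTriang C := by
  have h₁ : f ≫ 𝟙 Y = 𝟙 X ≫ f := by simp
  have h₂ : (g ≫ e.hom) ≫ e.inv = 𝟙 Y ≫ g := by simp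
  have h₃ : (e.inv ≫ h) ≫ (𝟙 X)⟦(1 : ℤ)⟧' = e.inv ≫ h := by simp
  exact isomorphic_distinguished _ hT _
    (Triangle.isoMk _ _ (Iso.refl X) (Iso.refl Y) e.symm h₁ h₂ h₃)

end IsoOfTriangle

namespace WeightStructure

variable (w : WeightStructure C)

lemma mem_LE_of_iso {X Y : C} (e : X ≅ Y) (hY : Y ∈ w.LE) : X ∈ w.LE :=
  w.retract_LE ⟨e.hom, e.inv, e.hom_inv_id⟩ hY

lemma mem_GE_of_iso {X Y : C} (e : X ≅ Y) (hY : Y ∈ w.GE) : X ∈ w.GE :=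
  w.retract_GE ⟨e.hom, e.inv, e.hom_inv_id⟩ hY

lemma mem_le_of_retract {X Y : C} {i : ℤ} (r : Retract X Y) (hY : Y ∈ w.le i) : X ∈ w.le i :=
  let r' := r.map (shiftFunctor C (-i))
  w.retract_LE ⟨r'.i, r'.r, r'.retract⟩ hY

lemma mem_ge_of_retract {X Y : C} {i : ℤ} (r : Retract X Y) (hY : Y ∈ w.ge i) : X ∈ w.ge i :=
  let r' := r.map (shiftFunctor C (-i))
  w.retract_GE ⟨r'.i, r'.r, r'.retract⟩ hY

lemma mem_le_zero_iff {X : C} : X ∈ w.le 0 ↔ X ∈ w.LE :=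
  have e : X⟦(-0 : ℤ)⟧ ≅ X := (shiftFunctorZero' C (-0 : ℤ) neg_zero).app X
  ⟨w.mem_LE_of_iso e.symm, w.mem_LE_of_iso e⟩

lemma mem_ge_zero_iff {X : C} : X ∈ w.ge 0 ↔ X ∈ w.GE :=
  have e : X⟦(-0 : ℤ)⟧ ≅ X := (shiftFunctorZero' C (-0 : ℤ) neg_zero).app X
  ⟨w.mem_GE_of_iso e.symm, w.mem_GE_of_iso e⟩

lemma shift_mem_le {X : C} {i : ℤ} (hX : X ∈ w.le i) (n j : ℤ) (hj : i + n = j) :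
    X⟦n⟧ ∈ w.le j :=
  w.mem_LE_of_iso ((shiftFunctorAdd' C n (-j) (-i) (by lia)).app X).symm hX

lemma shift_mem_ge {X : C} {i : ℤ} (hX : X ∈ w.ge i) (n j : ℤ) (hj : i + n = j) :
    X⟦n⟧ ∈ w.ge j :=
  w.mem_GE_of_iso ((shiftFunctorAdd' C n (-j) (-i) (by lia)).app X).symm hX

lemma ge_anti {i j : ℤ} (hij : i ≤ j) : w.ge j ⊆ w.ge i := by
  induction j, hij using Int.leInduction with
  | base => exact subset_rfl
  | succ j _ ih =>
    exact fun X hX => ih <| w.mem_GE_of_iso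
      ((shiftFunctorAdd' C (-(j + 1)) 1 (-j) (by lia)).app X) (w.shift_GE hX)

lemma hom_eq_zero_s13 {A B : C} {i j : ℤ} (hA : A ∈ w.le i) (hB : B ∈ w.ge j) (hij : i < j)
    (f : A ⟶ B) : f = 0 := by
  have hB' : B ∈ w.ge (i + 1) := w.ge_anti hij hB
  let e : B⟦-i⟧ ≅ B⟦-(i + 1)⟧⟦(1 : ℤ)⟧ := (shiftFunctorAdd' C (-(i + 1)) 1 (-i) (by lia)).app B
  apply (shiftFunctor C (-i)).map_injective
  rw [Functor.map_zero, ← cancel_mono e.hom, zero_comp]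
  exact w.orthogonal hA hB' (f⟦-i⟧' ≫ e.hom)

end WeightStructure

/-- An `l`-weight decomposition `w_{≤l}M → M → w_{≥l+1}M → (w_{≤l}M)[1]` of an object `M`. -/
structure WeightDecomposition (w : WeightStructure C) (M : C) (l : ℤ) where
  trunc : C
  cone : C
  ι : trunc ⟶ M
  π : M ⟶ cone
  δ : cone ⟶ trunc⟦(1 : ℤ)⟧
  dist : Triangle.mk ι π δ ∈ distTriang C
  trunc_mem : trunc ∈ w.le l
  cone_mem : cone ∈ w.ge (l + 1)

namespace WeightDecomposition

variable {w : WeightStructure C}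

instance (M : C) (l : ℤ) : Nonempty (WeightDecomposition w M l) := by
  obtain ⟨X, Y, f, g, h, hT, hX, hY⟩ := w.decomp (M⟦-l⟧)
  let e : M⟦-l⟧⟦l⟧ ≅ M := (shiftFunctorCompIsoId C (-l) l (by lia)).app M
  exact ⟨{ trunc := X⟦l⟧
           cone := Y⟦l⟧
           ι := _
           π := _
           δ := _
           dist := distTriang_of_iso₂ (Triangle.shift_distinguished _ hT l) e
           trunc_mem := w.shift_mem_le (w.mem_le_zero_iff.2 hX) l l (by lia)
           cone_mem := w.shift_mem_ge (i := 1) hY l (l + 1) (by lia) }⟩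

variable {M A : C} {l i : ℤ} (D : WeightDecomposition w M l)

lemma exists_lift (hA : A ∈ w.le i) (hi : i ≤ l) (f : A ⟶ M) : ∃ g : A ⟶ D.trunc, g ≫ D.ι = f := by
  have hf : f ≫ D.π = 0 := w.hom_eq_zero_s13 hA D.cone_mem (by lia) _
  obtain ⟨g, hg⟩ := Triangle.coyoneda_exact₂ _ D.dist f hf
  exact ⟨g, hg.symm⟩

lemma hom_eq_zero_of_comp_shift_ι (hA : A ∈ w.le i) (hi : i ≤ l) (f : A ⟶ D.trunc⟦(1 : ℤ)⟧)
    (hf : f ≫ D.ι⟦(1 : ℤ)⟧' = 0) : f = 0 := by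
  obtain ⟨g, rfl⟩ : ∃ g : A ⟶ D.cone, f = g ≫ D.δ := Triangle.coyoneda_exact₁ _ D.dist f hf
  rw [w.hom_eq_zero_s13 hA D.cone_mem (by lia) g, zero_comp]

lemma hom_ext (hA : A ∈ w.le i) (hi : i < l) {f g : A ⟶ D.trunc} (h : f ≫ D.ι = g ≫ D.ι) :
    f = g := by
  rw [← sub_eq_zero]
  apply (shiftFunctor C (1 : ℤ)).map_injective
  rw [Functor.map_zero]
  refine D.hom_eq_zero_of_comp_shift_ι (w.shift_mem_le hA 1 (i + 1) rfl) hi _ ?_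
  rw [← Functor.map_comp, Preadditive.sub_comp, h, sub_self, Functor.map_zero]

end WeightDecomposition

namespace WeightStructure

variable (w : WeightStructure C)

lemma mem_ge_of_forall_hom_eq_zero {Z : C} {i : ℤ} (h : ∀ A ∈ w.le i, ∀ f : A ⟶ Z, f = 0) :
    Z ∈ w.ge (i + 1) := by
  obtain ⟨D⟩ : Nonempty (WeightDecomposition w Z i) := inferInstance
  have hι : D.ι ≫ 𝟙 Z = 0 := by rw [h _ D.trunc_mem D.ι, zero_comp]
  obtain ⟨r, hr⟩ : ∃ r : D.cone ⟶ Z, 𝟙 Z = D.π ≫ r := Triangle.yoneda_exact₂ _ D.dist _ hι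
  exact w.mem_ge_of_retract ⟨D.π, r, hr.symm⟩ D.cone_mem

lemma mem_le_of_forall_hom_eq_zero {Z : C} {i : ℤ} (h : ∀ B ∈ w.ge (i + 1), ∀ f : Z ⟶ B, f = 0) :
    Z ∈ w.le i := by
  obtain ⟨D⟩ : Nonempty (WeightDecomposition w Z i) := inferInstance
  have hπ : 𝟙 Z ≫ D.π = 0 := by rw [h _ D.cone_mem D.π, comp_zero]
  obtain ⟨s, hs⟩ : ∃ s : Z ⟶ D.trunc, 𝟙 Z = s ≫ D.ι := Triangle.coyoneda_exact₂ _ D.dist _ hπ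
  exact w.mem_le_of_retract ⟨s, D.ι, hs.symm⟩ D.trunc_mem

lemma le_mono {i j : ℤ} (hij : i ≤ j) : w.le i ⊆ w.le j := fun _ hX =>
  w.mem_le_of_forall_hom_eq_zero fun _ hB => w.hom_eq_zero_s13 hX hB (by lia)

lemma mem_le_of_isZero {Z : C} (hZ : IsZero Z) (i : ℤ) : Z ∈ w.le i :=
  w.mem_le_of_forall_hom_eq_zero fun _ _ _ => hZ.eq_of_src _ _

lemma mem_le_of_distTriang {T : Triangle C} (hT : T ∈ distTriang C) {i : ℤ}
    (h₁ : T.obj₁ ∈ w.le i) (h₃ : T.obj₃ ∈ w.le i) : T.obj₂ ∈ w.le i := by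
  refine w.mem_le_of_forall_hom_eq_zero fun B hB f => ?_
  obtain ⟨g, rfl⟩ := Triangle.yoneda_exact₂ T hT f (w.hom_eq_zero_s13 h₁ hB (by lia) _)
  rw [w.hom_eq_zero_s13 h₃ hB (by lia) g, comp_zero]

end WeightStructure

namespace WeightDecomposition

variable {w : WeightStructure C} {M : C} {l l' : ℤ}

section Step

variable (D : WeightDecomposition w M l) (D' : WeightDecomposition w M l') (hl : l < l')
  {f : D.trunc ⟶ D'.trunc} {Z : C} {g : D'.trunc ⟶ Z} {h : Z ⟶ D.trunc⟦(1 : ℤ)⟧}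
  (hT : Triangle.mk f g h ∈ distTriang C)

include hl hT

lemma cone_step_mem_le : Z ∈ w.le l' :=
  w.mem_le_of_distTriang (rot_of_distTriang _ hT) D'.trunc_mem
    (w.le_mono (by lia) (w.shift_mem_le D.trunc_mem 1 (l + 1) rfl))

-- Morphisms out of `A ∈ w.le l` are chased by hand, as `C` need not satisfy the octahedral axiom.
lemma cone_step_mem_ge (hf : f ≫ D'.ι = D.ι) : Z ∈ w.ge (l + 1) := by
  refine w.mem_ge_of_forall_hom_eq_zero fun A hA x => ?_
  have hh : h ≫ f⟦(1 : ℤ)⟧' = 0 := comp_distTriang_mor_zero₃₁ _ hT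
  have hx : x ≫ h = 0 := D.hom_eq_zero_of_comp_shift_ι hA le_rfl _ <| by
    rw [← hf, Functor.map_comp, Category.assoc, reassoc_of% hh, zero_comp, comp_zero]
  obtain ⟨y, rfl⟩ : ∃ y : A ⟶ D'.trunc, x = y ≫ g := Triangle.coyoneda_exact₃ _ hT x hx
  obtain ⟨z, hz⟩ := D.exists_lift hA le_rfl (y ≫ D'.ι)
  have hzy : z ≫ f = y := D'.hom_ext hA hl (by rw [Category.assoc, hf, hz])
  have hfg : f ≫ g = 0 := comp_distTriang_mor_zero₁₂ _ hT
  rw [← hzy, Category.assoc, hfg, comp_zero]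

end Step

lemma exists_step_distTriang (D : WeightDecomposition w M l)
    (D' : WeightDecomposition w M (l + 1)) :
    ∃ p : Σ N : C, D'.trunc ⟶ N⟦l + 1⟧, (p.1 ∈ w.LE ∧ p.1 ∈ w.GE) ∧
      ∃ (f : D.trunc ⟶ D'.trunc) (δ : p.1⟦l + 1⟧ ⟶ D.trunc⟦(1 : ℤ)⟧),
        f ≫ D'.ι = D.ι ∧ Triangle.mk f p.2 δ ∈ distTriang C := by
  obtain ⟨f, hf⟩ := D'.exists_lift D.trunc_mem (by lia) D.ι
  obtain ⟨Z, g, h, hT⟩ := distinguished_cocone_triangle f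
  let e : Z⟦-(l + 1)⟧⟦l + 1⟧ ≅ Z := (shiftFunctorCompIsoId C (-(l + 1)) (l + 1) (by lia)).app Z
  exact ⟨⟨Z⟦-(l + 1)⟧, g ≫ e.inv⟩,
    ⟨D.cone_step_mem_le D' (by lia) hT, D.cone_step_mem_ge D' (by lia) hT hf⟩,
    f, e.hom ≫ h, hf, distTriang_of_iso₃ hT e.symm⟩

end WeightDecomposition

namespace WeightPostnikovTower

variable {w : WeightStructure C} {M M' M'' : C}

section Tower

variable (T : WeightPostnikovTower w M)

/-- The weight decomposition of `M` given by the `l`-th truncation of a weight Postnikov tower. -/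
def decomposition (l : ℤ) : WeightDecomposition w M l where
  trunc := T.trunc l
  cone := T.conePt l
  ι := T.ι l
  π := T.coneπ l
  δ := T.coneδ l
  dist := T.trunc_dist l
  trunc_mem := T.trunc_mem l
  cone_mem := T.cone_mem l

lemma exists_lift {A : C} {i l : ℤ} (hA : A ∈ w.le i) (hi : i ≤ l) (f : A ⟶ M) :
    ∃ g : A ⟶ T.trunc l, g ≫ T.ι l = f :=
  (T.decomposition l).exists_lift hA hi f

lemma hom_ext {A : C} {i l : ℤ} (hA : A ∈ w.le i) (hi : i < l) {f g : A ⟶ T.trunc l}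
    (h : f ≫ T.ι l = g ≫ T.ι l) : f = g :=
  (T.decomposition l).hom_ext hA hi h

lemma shift_bd_comp {l : ℤ} {N : C} (x : T.termAt l ⟶ N) :
    (T.bd (l + 1) l ≫ x)⟦l + 1⟧' ≫ (shiftFunctorAdd' C l 1 (l + 1) rfl).hom.app N =
      T.sδ l ≫ (T.sπ l ≫ x⟦l⟧')⟦(1 : ℤ)⟧' := by
  have hx : x⟦l + 1⟧' ≫ (shiftFunctorAdd' C l 1 (l + 1) rfl).hom.app N =
      (shiftFunctorAdd' C l 1 (l + 1) rfl).hom.app (T.termAt l) ≫ x⟦l⟧'⟦(1 : ℤ)⟧' :=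
    (shiftFunctorAdd' C l 1 (l + 1) rfl).hom.naturality x
  rw [Functor.map_comp, Functor.map_comp, Category.assoc, hx, reassoc_of% T.bd_eq l]

lemma sπ_comp_shift_bd (l : ℤ) : T.sπ (l + 1) ≫ (T.bd (l + 1) l)⟦l + 1⟧' = 0 := by
  have h : T.sπ (l + 1) ≫ T.sδ l = 0 := comp_distTriang_mor_zero₂₃ _ (T.step_dist l)
  rw [← cancel_mono ((shiftFunctorAdd' C l 1 (l + 1) rfl).hom.app (T.termAt l)), Category.assoc,
    T.bd_eq, reassoc_of% h, zero_comp, zero_comp]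

lemma bd_comp_bd (l : ℤ) : T.bd (l + 1 + 1) (l + 1) ≫ T.bd (l + 1) l = 0 := by
  apply (shiftFunctor C (l + 1 + 1)).map_injective
  rw [← cancel_mono ((shiftFunctorAdd' C (l + 1) 1 (l + 1 + 1) rfl).hom.app (T.termAt l)),
    shift_bd_comp, sπ_comp_shift_bd, Functor.map_zero, Functor.map_zero, zero_comp, comp_zero]

/-- The weight complex of a weight Postnikov tower, as a homologically indexed complex: its
`l`-th term is `M^{-l}`. -/
def weightComplex : ChainComplex C ℤ where
  X := T.termAt
  d := T.bd
  shape := T.bd_shape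
  d_comp_d' := by
    rintro _ _ l rfl rfl
    exact T.bd_comp_bd l

lemma exists_eq_sπ_comp {l : ℤ} {N : C} (hN : N ∈ w.GE) (v : T.trunc l ⟶ N⟦l⟧) :
    ∃ s : T.termAt l ⟶ N, v = T.sπ l ≫ s⟦l⟧' := by
  obtain ⟨k, rfl⟩ : ∃ k, l = k + 1 := ⟨l - 1, by lia⟩
  have hv : T.step k ≫ v = 0 := w.hom_eq_zero_s13 (T.trunc_mem k)
    (w.shift_mem_ge (w.mem_ge_zero_iff.2 hN) (k + 1) (k + 1) (by lia)) (by lia) _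
  obtain ⟨x, hx⟩ := Triangle.yoneda_exact₂ _ (T.step_dist k) v hv
  obtain ⟨s, rfl⟩ := (shiftFunctor C (k + 1)).map_surjective x
  exact ⟨s, hx⟩

lemma exists_comp_shiftFunctorAdd'_eq {l : ℤ} {N : C} (hN : N ∈ w.GE)
    (v : (T.trunc l)⟦(1 : ℤ)⟧ ⟶ N⟦l + 1⟧) : ∃ s : T.termAt l ⟶ N,
      v ≫ (shiftFunctorAdd' C l 1 (l + 1) rfl).hom.app N = (T.sπ l ≫ s⟦l⟧')⟦(1 : ℤ)⟧' := by
  obtain ⟨v', hv'⟩ := (shiftFunctor C (1 : ℤ)).map_surjective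
    (v ≫ (shiftFunctorAdd' C l 1 (l + 1) rfl).hom.app N)
  obtain ⟨s, rfl⟩ := T.exists_eq_sπ_comp hN v'
  exact ⟨s, hv'.symm⟩

lemma exists_eq_bd_comp {l : ℤ} {N : C} (hN : N ∈ w.GE) (x : T.termAt (l + 1) ⟶ N)
    (hx : T.sπ (l + 1) ≫ x⟦l + 1⟧' = 0) : ∃ t : T.termAt l ⟶ N, x = T.bd (l + 1) l ≫ t := by
  obtain ⟨v, hv⟩ : ∃ v : (T.trunc l)⟦(1 : ℤ)⟧ ⟶ N⟦l + 1⟧, x⟦l + 1⟧' = T.sδ l ≫ v :=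
    Triangle.yoneda_exact₃ _ (T.step_dist l) _ hx
  obtain ⟨t, ht⟩ := T.exists_comp_shiftFunctorAdd'_eq hN v
  refine ⟨t, (shiftFunctor C (l + 1)).map_injective ?_⟩
  rw [← cancel_mono ((shiftFunctorAdd' C l 1 (l + 1) rfl).hom.app N), T.shift_bd_comp, hv,
    Category.assoc, ht]

end Tower

/-- A morphism of weight Postnikov towers over a morphism `m : M ⟶ M'`. The squares with the
transition morphisms `step` are not part of the data, as they commute by orthogonality. -/
structure Hom (T : WeightPostnikovTower w M) (T' : WeightPostnikovTower w M') (m : M ⟶ M') where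
  trunc : ∀ l, T.trunc l ⟶ T'.trunc l
  term : ∀ l, T.termAt l ⟶ T'.termAt l
  trunc_ι : ∀ l, trunc l ≫ T'.ι l = T.ι l ≫ m
  sπ_term : ∀ l, T.sπ l ≫ (term l)⟦l⟧' = trunc l ≫ T'.sπ l
  sδ_trunc : ∀ l, T.sδ l ≫ (trunc l)⟦(1 : ℤ)⟧' = (term (l + 1))⟦l + 1⟧' ≫ T'.sδ l

namespace Hom

variable {T : WeightPostnikovTower w M} {T' : WeightPostnikovTower w M'}
  {T'' : WeightPostnikovTower w M''} {m m₁ m₂ : M ⟶ M'} {m' : M' ⟶ M''}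

variable (T T' m) in
lemma nonempty : Nonempty (Hom T T' m) := by
  choose f hf using fun l => T'.exists_lift (T.trunc_mem l) le_rfl (T.ι l ≫ m)
  have hstep (l : ℤ) : T.step l ≫ f (l + 1) = f l ≫ T'.step l := by
    refine T'.hom_ext (T.trunc_mem l) (by lia) ?_
    rw [Category.assoc, Category.assoc, hf, T'.step_ι, hf, reassoc_of% T.step_ι l]
  have hterm (l : ℤ) : ∃ x : T.termAt (l + 1) ⟶ T'.termAt (l + 1),
      T.sπ (l + 1) ≫ x⟦l + 1⟧' = f (l + 1) ≫ T'.sπ (l + 1) ∧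
        T.sδ l ≫ (f l)⟦(1 : ℤ)⟧' = x⟦l + 1⟧' ≫ T'.sδ l := by
    obtain ⟨c, hc⟩ := complete_distinguished_triangle_morphism _ _ (T.step_dist l) (T'.step_dist l)
      (f l) (f (l + 1)) (hstep l)
    obtain ⟨x, rfl⟩ := (shiftFunctor C (l + 1)).map_surjective c
    exact ⟨x, hc⟩
  obtain ⟨x, hx⟩ := exists_forall_of_forall_exists_add_one
    (β := fun l => T.termAt l ⟶ T'.termAt l) hterm
  refine ⟨⟨f, x, hf, fun l => ?_, fun l => (hx l).2⟩⟩
  obtain ⟨k, rfl⟩ : ∃ k, l = k + 1 := ⟨l - 1, by lia⟩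
  exact (hx k).1

variable (T) in
/-- The identity of a weight Postnikov tower. -/
def id : Hom T T (𝟙 M) where
  trunc l := 𝟙 _
  term l := 𝟙 _
  trunc_ι l := by simp
  sπ_term l := by simp
  sδ_trunc l := by simp

/-- The composition of morphisms of weight Postnikov towers. -/
def comp (φ : Hom T T' m) (ψ : Hom T' T'' m') : Hom T T'' (m ≫ m') where
  trunc l := φ.trunc l ≫ ψ.trunc l
  term l := φ.term l ≫ ψ.term l
  trunc_ι l := by rw [Category.assoc, ψ.trunc_ι, reassoc_of% φ.trunc_ι l]
  sπ_term l := by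
    rw [Functor.map_comp, reassoc_of% φ.sπ_term l, ψ.sπ_term, Category.assoc]
  sδ_trunc l := by
    rw [Functor.map_comp, Functor.map_comp, reassoc_of% φ.sδ_trunc l, ψ.sδ_trunc, Category.assoc]

/-- The difference of morphisms of weight Postnikov towers. -/
def sub (φ : Hom T T' m₁) (ψ : Hom T T' m₂) : Hom T T' (m₁ - m₂) where
  trunc l := φ.trunc l - ψ.trunc l
  term l := φ.term l - ψ.term l
  trunc_ι l := by rw [Preadditive.sub_comp, φ.trunc_ι, ψ.trunc_ι, Preadditive.comp_sub]
  sπ_term l := by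
    rw [Functor.map_sub, Preadditive.comp_sub, φ.sπ_term, ψ.sπ_term, Preadditive.sub_comp]
  sδ_trunc l := by
    rw [Functor.map_sub, Functor.map_sub, Preadditive.comp_sub, φ.sδ_trunc, ψ.sδ_trunc,
      Preadditive.sub_comp]

lemma term_comp_bd (φ : Hom T T' m) (l : ℤ) :
    φ.term (l + 1) ≫ T'.bd (l + 1) l = T.bd (l + 1) l ≫ φ.term l := by
  apply (shiftFunctor C (l + 1)).map_injective
  rw [← cancel_mono ((shiftFunctorAdd' C l 1 (l + 1) rfl).hom.app (T'.termAt l)), T.shift_bd_comp,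
    Functor.map_comp, Category.assoc, T'.bd_eq, ← reassoc_of% φ.sδ_trunc l, φ.sπ_term,
    Functor.map_comp]

/-- The morphism of weight complexes induced by a morphism of weight Postnikov towers. -/
def chainMap (φ : Hom T T' m) : T.weightComplex ⟶ T'.weightComplex where
  f := φ.term
  comm' := by
    rintro _ l rfl
    exact φ.term_comp_bd l

lemma exists_sπ_comp_shift_term_eq (φ : Hom T T' 0) (l : ℤ) :
    ∃ s : T.termAt l ⟶ T'.termAt (l + 1),
      T.sπ l ≫ (φ.term l)⟦l⟧' = T.sπ l ≫ (s ≫ T'.bd (l + 1) l)⟦l⟧' := by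
  have hstep : φ.trunc l ≫ T'.step l = 0 := by
    refine T'.hom_ext (T.trunc_mem l) (by lia) ?_
    rw [Category.assoc, T'.step_ι, φ.trunc_ι, comp_zero, zero_comp]
  obtain ⟨v, hv⟩ : ∃ v, (φ.trunc l)⟦(1 : ℤ)⟧' = v ≫ T'.sδ l :=
    Triangle.coyoneda_exact₁ _ (T'.step_dist l) _
      ((Functor.map_comp _ _ _).symm.trans ((congrArg _ hstep).trans (Functor.map_zero _ _ _)))
  obtain ⟨s, hs⟩ := T.exists_comp_shiftFunctorAdd'_eq (T'.term_mem (l + 1)).2 v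
  refine ⟨s, (shiftFunctor C (1 : ℤ)).map_injective ?_⟩
  have hsδ : T'.sδ l ≫ (T'.sπ l)⟦(1 : ℤ)⟧' = (T'.bd (l + 1) l)⟦l + 1⟧' ≫
      (shiftFunctorAdd' C l 1 (l + 1) rfl).hom.app _ := (T'.bd_eq l).symm
  have hbd : (T'.bd (l + 1) l)⟦l + 1⟧' ≫ (shiftFunctorAdd' C l 1 (l + 1) rfl).hom.app _ =
      (shiftFunctorAdd' C l 1 (l + 1) rfl).hom.app _ ≫ (T'.bd (l + 1) l)⟦l⟧'⟦(1 : ℤ)⟧' :=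
    (shiftFunctorAdd' C l 1 (l + 1) rfl).hom.naturality _
  calc (T.sπ l ≫ (φ.term l)⟦l⟧')⟦(1 : ℤ)⟧'
      = v ≫ T'.sδ l ≫ (T'.sπ l)⟦(1 : ℤ)⟧' := by
        rw [φ.sπ_term, Functor.map_comp, hv, Category.assoc]
    _ = (v ≫ (shiftFunctorAdd' C l 1 (l + 1) rfl).hom.app _) ≫
          (T'.bd (l + 1) l)⟦l⟧'⟦(1 : ℤ)⟧' := by rw [hsδ, hbd, Category.assoc]
    _ = (T.sπ l ≫ (s ≫ T'.bd (l + 1) l)⟦l⟧')⟦(1 : ℤ)⟧' := by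
        rw [hs, ← Functor.map_comp, Category.assoc, ← Functor.map_comp]

lemma isWeaklyNullHomotopic_chainMap (φ : Hom T T' m) (hm : m = 0) :
    IsWeaklyNullHomotopic φ.chainMap := by
  subst hm
  choose s hs using φ.exists_sπ_comp_shift_term_eq
  have hterm (l : ℤ) : ∃ t : T.termAt l ⟶ T'.termAt (l + 1),
      φ.term (l + 1) - s (l + 1) ≫ T'.bd (l + 1 + 1) (l + 1) = T.bd (l + 1) l ≫ t :=
    T.exists_eq_bd_comp (T'.term_mem (l + 1)).2 _ <| by
      rw [Functor.map_sub, Preadditive.comp_sub, hs, sub_self]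
  choose t ht using hterm
  exact isWeaklyNullHomotopic_of_forall_add_one s t fun l => sub_eq_iff_eq_add.1 (ht l)

end Hom

theorem homotopyEquivDown (e : M ≅ M') (T : WeightPostnikovTower w M)
    (T' : WeightPostnikovTower w M') :
    HomotopyEquivDown T.termAt T'.termAt (towerD T) (towerD T') := by
  obtain ⟨φ⟩ := Hom.nonempty T T' e.hom
  obtain ⟨ψ⟩ := Hom.nonempty T' T e.inv
  have hφψ : IsWeaklyNullHomotopic (φ.chainMap ≫ ψ.chainMap - 𝟙 T.weightComplex) :=
    ((φ.comp ψ).sub (.id T)).isWeaklyNullHomotopic_chainMap (by rw [e.hom_inv_id, sub_self])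
  have hψφ : IsWeaklyNullHomotopic (ψ.chainMap ≫ φ.chainMap - 𝟙 T'.weightComplex) :=
    ((ψ.comp φ).sub (.id T')).isWeaklyNullHomotopic_chainMap (by rw [e.inv_hom_id, sub_self])
  obtain ⟨H⟩ := nonempty_homotopyEquiv_of_isWeaklyNullHomotopic hφψ hψφ
  exact homotopyEquivDown_of_homotopyEquiv H

theorem exists_decomposition_eq (D : ∀ l, WeightDecomposition w M l) :
    ∃ T : WeightPostnikovTower w M, ∀ l, T.decomposition l = D l := by
  obtain ⟨p, hp⟩ := exists_forall_of_forall_exists_add_one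
    (β := fun m => Σ N : C, (D m).trunc ⟶ N⟦m⟧) fun l => (D l).exists_step_distTriang (D (l + 1))
  choose hmem step sδ hstep hdist using hp
  have hd (l : ℤ) : ∃ d : (p (l + 1)).1 ⟶ (p l).1,
      d⟦l + 1⟧' = (sδ l ≫ (p l).2⟦(1 : ℤ)⟧') ≫
        (shiftFunctorAdd' C l 1 (l + 1) rfl).inv.app (p l).1 :=
    (shiftFunctor C (l + 1)).map_surjective _
  choose d hd using hd
  obtain ⟨bd, hbd, hbd₀⟩ := exists_extend_by_zero (β := fun i j => (p i).1 ⟶ (p j).1) d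
  exact ⟨{ trunc l := (D l).trunc
           trunc_mem l := (D l).trunc_mem
           ι l := (D l).ι
           conePt l := (D l).cone
           cone_mem l := (D l).cone_mem
           coneπ l := (D l).π
           coneδ l := (D l).δ
           trunc_dist l := (D l).dist
           step := step
           step_ι := hstep
           termAt l := (p l).1
           term_mem l := by
             obtain ⟨k, rfl⟩ : ∃ k, l = k + 1 := ⟨l - 1, by lia⟩
             exact hmem k
           sπ l := (p l).2
           sδ := sδ
           step_dist := hdist
           bd := bd
           bd_shape := hbd₀
           bd_eq l := by
             rw [hbd, hd, Category.assoc, Iso.inv_hom_id_app]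
             exact Category.comp_id _ }, fun _ => rfl⟩

lemma isZero_termAt (T : WeightPostnikovTower w M) {l : ℤ} (h : IsZero (T.trunc l))
    (h' : IsZero (T.trunc (l + 1))) : IsZero (T.termAt (l + 1)) :=
  IsZero.of_full_of_faithful_of_isZero (shiftFunctor C (l + 1)) _
    (Triangle.isZero₃_of_isZero₁₂ _ (T.step_dist l) h h')

open scoped ZeroObject in
theorem exists_isZero_termAt_of_mem_ge {n : ℤ} (hM : M ∈ w.ge n) :
    ∃ T : WeightPostnikovTower w M, ∀ l < n, IsZero (T.termAt l) := by
  have hD (l : ℤ) : ∃ D : WeightDecomposition w M l, l < n → IsZero D.trunc := by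
    by_cases hl : l < n
    · exact ⟨⟨0, M, 0, 𝟙 M, 0, contractible_distinguished₁ M, w.mem_le_of_isZero (isZero_zero C) l,
        w.ge_anti (by lia) hM⟩, fun _ => isZero_zero C⟩
    · obtain ⟨D⟩ : Nonempty (WeightDecomposition w M l) := inferInstance
      exact ⟨D, fun h => absurd h hl⟩
  choose D hD using hD
  obtain ⟨T, hT⟩ := exists_decomposition_eq D
  have htrunc (l : ℤ) (hl : l < n) : IsZero (T.trunc l) :=
    show IsZero (T.decomposition l).trunc from (hT l).symm ▸ hD l hl
  refine ⟨T, fun l hl => ?_⟩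
  obtain ⟨k, rfl⟩ : ∃ k, l = k + 1 := ⟨l - 1, by lia⟩
  exact T.isZero_termAt (htrunc k (by lia)) (htrunc (k + 1) hl)

end WeightPostnikovTower

theorem statement13_general (w : WeightStructure C) (M : C) (T₁ T₂ : WeightPostnikovTower w M) :
    HomotopyEquivDown T₁.termAt T₂.termAt (towerD T₁) (towerD T₂) ∧
    ∀ n : ℤ, M ∈ w.ge n → ∃ (Y : ℤ → C) (dY : ∀ l : ℤ, Y (l + 1) ⟶ Y l),
      (∀ l : ℤ, Y l ∈ w.LE ∧ Y l ∈ w.GE) ∧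
      (∀ l : ℤ, dY (l + 1) ≫ dY l = 0) ∧
      (∀ l : ℤ, l < n → IsZero (Y l)) ∧
      HomotopyEquivDown T₁.termAt Y (towerD T₁) dY := by
  refine ⟨T₁.homotopyEquivDown (Iso.refl M) T₂, fun n hM => ?_⟩
  obtain ⟨T, hT⟩ := WeightPostnikovTower.exists_isZero_termAt_of_mem_ge hM
  exact ⟨T.termAt, towerD T, T.term_mem, T.bd_comp_bd, hT, T₁.homotopyEquivDown (Iso.refl M) T⟩

/-- for a bounded weight structure, any two weight complexes of `M`
(arising from two weight Postnikov towers) are isomorphic in `K(Hw)` (i.e., homotopy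
equivalent); moreover, if `M ∈ C_{w≥0}` then any weight complex of `M` is homotopy
equivalent to a complex with heart terms whose terms in positive (cohomological)
degrees vanish (the term `Y l` sits in cohomological degree `-l`). -/
theorem statement13 (w : WeightStructure C) (hw : w.IsBounded) (M : C)
    (T₁ T₂ : WeightPostnikovTower w M) :
    HomotopyEquivDown T₁.termAt T₂.termAt (towerD T₁) (towerD T₂) ∧
    (M ∈ w.GE → ∃ (Y : ℤ → C) (dY : ∀ l : ℤ, Y (l + 1) ⟶ Y l),
      (∀ l : ℤ, Y l ∈ w.LE ∧ Y l ∈ w.GE) ∧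
      (∀ l : ℤ, dY (l + 1) ≫ dY l = 0) ∧
      (∀ l : ℤ, l < 0 → IsZero (Y l)) ∧
      HomotopyEquivDown T₁.termAt Y (towerD T₁) dY) := by
  obtain ⟨hT, hY⟩ := statement13_general w M T₁ T₂
  exact ⟨hT, fun hM => hY 0 (w.mem_ge_zero_iff.2 hM)⟩

end CWH
end
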